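/- Let 0 < δ < 1, ε > 0, p ∈ {1,…,d}, and set V = 2(tr(A) + 4A_{p,p})² + ‖A + Aᵀ‖² + 8‖A_{p,:} + A_{:,p}‖² − 12A_{p,p}². If the sample size N (a positive integer) satisfies N ≥ V/(4δε²), then with probability at least 1 − δ the estimator satisfies A_{p,p} − ε ≤ g_p ≤ A_{p,p} + ε. -/

import Mathlib

open MeasureTheory ProbabilityTheory Finset

noncomputable def stdGaussianVec (d : ℕ) : Measure (Fin d → ℝ) :=
  Measure.pi fun _ => gaussianReal 0 1

def quadForm {d : ℕ} (A : Matrix (Fin d) (Fin d) ℝ) (u : Fin d → ℝ) : ℝ :=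
  ∑ i, ∑ j, A i j * u i * u j


lemma esc_int_pow (n : ℕ) : Integrable (fun x : ℝ => x ^ n) (gaussianReal 0 1) := by
  have h := (memLp_id_gaussianReal (μ := 0) (v := 1) (n : NNReal)).integrable_norm_pow'
  have h2 : Integrable (fun x : ℝ => ‖x ^ n‖) (gaussianReal 0 1) := by
    simpa [norm_pow] using h
  exact (integrable_norm_iff (by fun_prop)).1 h2

lemma esc_int_pow_vol (n : ℕ) :
    Integrable (fun x : ℝ => x ^ n * gaussianPDFReal 0 1 x) := by
  have h := esc_int_pow n
  rw [gaussianReal_of_var_ne_zero _ one_ne_zero,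
    integrable_withDensity_iff (measurable_gaussianPDF 0 1)
      (Filter.Eventually.of_forall fun x => gaussianPDF_lt_top)] at h
  simpa [toReal_gaussianPDF] using h

lemma esc_moment (n : ℕ) :
    ∫ x, x ^ (n + 1) ∂(gaussianReal 0 1) = n * ∫ x, x ^ (n - 1) ∂(gaussianReal 0 1) := by
  rw [integral_gaussianReal_eq_integral_smul one_ne_zero,
    integral_gaussianReal_eq_integral_smul one_ne_zero]
  have hv : ∀ x : ℝ, HasDerivAt (gaussianPDFReal 0 1) (-x * gaussianPDFReal 0 1 x) x := by
    intro x
    unfold gaussianPDFReal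
    have h1 : HasDerivAt (fun x : ℝ => -(x - 0) ^ 2 / (2 * ((1 : NNReal) : ℝ))) (-x) x := by
      have := ((((hasDerivAt_id x).sub_const 0).pow 2).neg).div_const (2 * ((1 : NNReal) : ℝ))
      refine this.congr_deriv ?_
      simp
      ring
    refine (h1.exp.const_mul _).congr_deriv ?_
    ring
  have h := integral_mul_deriv_eq_deriv_mul_of_integrable
    (u := fun x : ℝ => x ^ n) (u' := fun x => n * x ^ (n - 1))
    (v := gaussianPDFReal 0 1) (v' := fun x => -x * gaussianPDFReal 0 1 x)
    (fun x _ => hasDerivAt_pow n x) (fun x _ => hv x) ?_ ?_ ?_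
  · have e1 : ∀ x : ℝ, gaussianPDFReal 0 1 x • x ^ (n + 1)
        = -(x ^ n * (-x * gaussianPDFReal 0 1 x)) := by intro x; simp only [smul_eq_mul]; ring
    simp_rw [e1]
    rw [integral_neg, h, neg_neg, ← integral_const_mul]
    congr 1; ext x; simp only [smul_eq_mul]; ring
  · refine (esc_int_pow_vol (n + 1)).neg.congr (Filter.Eventually.of_forall fun x => ?_)
    simp only [Pi.neg_apply, Pi.mul_apply]; ring
  · refine ((esc_int_pow_vol (n - 1)).const_mul (n : ℝ)).congr
      (Filter.Eventually.of_forall fun x => ?_)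
    simp only [Pi.mul_apply]; ring
  · exact esc_int_pow_vol n

instance esc_prob (d : ℕ) : IsProbabilityMeasure (stdGaussianVec d) := by
  unfold stdGaussianVec; infer_instance

lemma esc_int_poly {d : ℕ} (q : MvPolynomial (Fin d) ℝ) :
    Integrable (fun u => MvPolynomial.eval u q) (stdGaussianVec d) := by
  induction q using MvPolynomial.induction_on' with
  | monomial m a =>
    simp only [MvPolynomial.eval_monomial]
    refine Integrable.const_mul ?_ a
    simp only [Finsupp.prod_fintype _ _ (fun i => pow_zero _)]
    exact Integrable.fintype_prod (f := fun i (x : ℝ) => x ^ (m i)) fun i => esc_int_pow _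
  | add p q hp hq =>
    simp only [map_add]
    exact hp.add hq

noncomputable def escL (d : ℕ) : MvPolynomial (Fin d) ℝ →ₗ[ℝ] ℝ where
  toFun q := ∫ u, MvPolynomial.eval u q ∂(stdGaussianVec d)
  map_add' p q := by
    simp only [map_add]; exact integral_add (esc_int_poly p) (esc_int_poly q)
  map_smul' c q := by
    simp only [MvPolynomial.smul_eval, RingHom.id_apply, smul_eq_mul]
    exact integral_const_mul _ _

lemma escL_apply {d : ℕ} (q : MvPolynomial (Fin d) ℝ) :
    escL d q = ∫ u, MvPolynomial.eval u q ∂(stdGaussianVec d) := rfl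

lemma escL_monomial {d : ℕ} (m : Fin d →₀ ℕ) (a : ℝ) :
    escL d (MvPolynomial.monomial m a) = a * ∏ i, ∫ x, x ^ (m i) ∂(gaussianReal 0 1) := by
  rw [escL_apply]
  simp only [MvPolynomial.eval_monomial]
  rw [integral_const_mul]
  congr 1
  simp only [Finsupp.prod_fintype _ _ (fun i => pow_zero _)]
  exact integral_fintype_prod_eq_prod (f := fun i (x : ℝ) => x ^ (m i))

lemma esc_stein {d : ℕ} (i : Fin d) (q : MvPolynomial (Fin d) ℝ) :
    escL d (MvPolynomial.X i * q) = escL d (MvPolynomial.pderiv i q) := by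
  induction q using MvPolynomial.induction_on' with
  | monomial m a =>
    rw [MvPolynomial.pderiv_monomial, MvPolynomial.X, MvPolynomial.monomial_mul, escL_monomial,
      escL_monomial, ← Finset.mul_prod_erase _ _ (mem_univ i),
      ← Finset.mul_prod_erase (a := i) (s := univ) _ (mem_univ i)]
    have e : ∀ k ∈ univ.erase i, ∫ x, x ^ ((Finsupp.single i 1 + m : Fin d →₀ ℕ) k) ∂(gaussianReal 0 1)
        = ∫ x, x ^ ((m - Finsupp.single i 1 : Fin d →₀ ℕ) k) ∂(gaussianReal 0 1) := by
      intro k hk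
      have : k ≠ i := (Finset.mem_erase.1 hk).1
      simp [Finsupp.single_apply, this.symm]
    rw [Finset.prod_congr rfl e]
    have e2 : (Finsupp.single i 1 + m : Fin d →₀ ℕ) i = m i + 1 := by simp [add_comm]
    have e3 : (m - Finsupp.single i 1 : Fin d →₀ ℕ) i = m i - 1 := by simp
    rw [e2, e3, esc_moment]
    ring
  | add p q hp hq => simp only [mul_add, map_add, hp, hq]

lemma escL_one (d : ℕ) : escL d 1 = 1 := by
  simp [escL_apply]

lemma escL_C (d : ℕ) (a : ℝ) : escL d (MvPolynomial.C a) = a := by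
  simp [escL_apply]

noncomputable def escD {d : ℕ} (i j : Fin d) : ℝ := if i = j then 1 else 0

lemma esc_pderiv_X_mul {d : ℕ} (i j : Fin d) (q : MvPolynomial (Fin d) ℝ) :
    MvPolynomial.pderiv i (MvPolynomial.X j * q)
      = escD i j • q + MvPolynomial.X j * MvPolynomial.pderiv i q := by
  rw [MvPolynomial.pderiv_mul]
  by_cases h : i = j
  · subst h; simp [escD]
  · simp [escD, h, MvPolynomial.pderiv_X_of_ne (Ne.symm h)]

section
variable {d : ℕ} (p : Fin d) (H : ℕ → MvPolynomial (Fin d) ℝ)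
  (hH : ∀ i n, MvPolynomial.pderiv i (H n) = escD i p • H (n + 1))

lemma esc_m1 (hH : ∀ i n, MvPolynomial.pderiv i (H n) = escD i p • H (n + 1)) (n : ℕ) (i : Fin d) :
    escL d (MvPolynomial.X i * H n) = escD i p * escL d (H (n + 1)) := by
  rw [esc_stein, hH]; simp

lemma esc_m2 (hH : ∀ i n, MvPolynomial.pderiv i (H n) = escD i p • H (n + 1)) (n : ℕ)
    (i j : Fin d) :
    escL d (MvPolynomial.X i * (MvPolynomial.X j * H n))
      = escD i j * escL d (H n) + escD i p * escD j p * escL d (H (n + 2)) := by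
  rw [esc_stein, esc_pderiv_X_mul, hH, mul_smul_comm, map_add, map_smul, map_smul, esc_m1 p H hH]
  simp only [smul_eq_mul]; ring

lemma esc_m3 (hH : ∀ i n, MvPolynomial.pderiv i (H n) = escD i p • H (n + 1)) (n : ℕ)
    (i j k : Fin d) :
    escL d (MvPolynomial.X i * (MvPolynomial.X j * (MvPolynomial.X k * H n)))
      = (escD i j * escD k p + escD i k * escD j p + escD j k * escD i p) * escL d (H (n + 1))
        + escD i p * escD j p * escD k p * escL d (H (n + 3)) := by
  rw [esc_stein, esc_pderiv_X_mul, esc_pderiv_X_mul, hH]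
  simp only [mul_smul_comm, map_add, map_smul, mul_add, esc_m1 p H hH, esc_m2 p H hH]
  simp only [smul_eq_mul]; ring

lemma esc_m4 (hH : ∀ i n, MvPolynomial.pderiv i (H n) = escD i p • H (n + 1)) (n : ℕ)
    (i j k l : Fin d) :
    escL d (MvPolynomial.X i * (MvPolynomial.X j * (MvPolynomial.X k * (MvPolynomial.X l * H n))))
      = (escD i j * escD k l + escD i k * escD j l + escD i l * escD j k) * escL d (H n)
        + (escD i j * escD k p * escD l p + escD i k * escD j p * escD l p
          + escD i l * escD j p * escD k p + escD j k * escD i p * escD l p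
          + escD j l * escD i p * escD k p + escD k l * escD i p * escD j p)
          * escL d (H (n + 2))
        + escD i p * escD j p * escD k p * escD l p * escL d (H (n + 4)) := by
  rw [esc_stein, esc_pderiv_X_mul, esc_pderiv_X_mul, esc_pderiv_X_mul, hH]
  simp only [mul_smul_comm, map_add, map_smul, mul_add, esc_m2 p H hH, esc_m3 p H hH]
  simp only [smul_eq_mul]; ring

end

noncomputable def escG {d : ℕ} (p : Fin d) : ℕ → MvPolynomial (Fin d) ℝ
  | 0 => MvPolynomial.X p ^ 2 - 1
  | 1 => MvPolynomial.C 2 * MvPolynomial.X p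
  | 2 => MvPolynomial.C 2
  | _ => 0

noncomputable def escH {d : ℕ} (p : Fin d) : ℕ → MvPolynomial (Fin d) ℝ
  | 0 => (MvPolynomial.X p ^ 2 - 1) ^ 2
  | 1 => MvPolynomial.C 4 * MvPolynomial.X p ^ 3 - MvPolynomial.C 4 * MvPolynomial.X p
  | 2 => MvPolynomial.C 12 * MvPolynomial.X p ^ 2 - MvPolynomial.C 4
  | 3 => MvPolynomial.C 24 * MvPolynomial.X p
  | 4 => MvPolynomial.C 24
  | _ => 0

lemma esc_pderiv_X {d : ℕ} (i j : Fin d) :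
    MvPolynomial.pderiv i (MvPolynomial.X j : MvPolynomial (Fin d) ℝ)
      = MvPolynomial.C (escD i j) := by
  by_cases h : i = j
  · subst h; simp [escD]
  · simp [escD, h, MvPolynomial.pderiv_X_of_ne (Ne.symm h)]

lemma esc_single {d : ℕ} (i j : Fin d) :
    (Pi.single (M := fun _ : Fin d => MvPolynomial (Fin d) ℝ) i 1 j) = MvPolynomial.C (escD i j) := by
  rw [← esc_pderiv_X, MvPolynomial.pderiv_X]

lemma escG_spec {d : ℕ} (p i : Fin d) (n : ℕ) :
    MvPolynomial.pderiv i (escG p n) = escD i p • escG p (n + 1) := by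
  have h2 : (MvPolynomial.C 2 : MvPolynomial (Fin d) ℝ) = 2 := map_ofNat _ 2
  rcases n with _ | _ | _ | n <;>
    simp [escG, MvPolynomial.pderiv_pow, esc_pderiv_X, MvPolynomial.smul_eq_C_mul,
      MvPolynomial.pderiv_mul, esc_single] <;> (try simp only [h2]) <;> ring

lemma escH_spec {d : ℕ} (p i : Fin d) (n : ℕ) :
    MvPolynomial.pderiv i (escH p n) = escD i p • escH p (n + 1) := by
  have h4 : (MvPolynomial.C 4 : MvPolynomial (Fin d) ℝ) = 4 := map_ofNat _ 4
  have h12 : (MvPolynomial.C 12 : MvPolynomial (Fin d) ℝ) = 12 := map_ofNat _ 12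
  have h24 : (MvPolynomial.C 24 : MvPolynomial (Fin d) ℝ) = 24 := map_ofNat _ 24
  rcases n with _ | _ | _ | _ | _ | n <;>
    simp [escH, MvPolynomial.pderiv_pow, esc_pderiv_X, MvPolynomial.smul_eq_C_mul,
      MvPolynomial.pderiv_mul, esc_single] <;> (try simp only [h4, h12, h24]) <;> ring

lemma escL_sq {d : ℕ} (p : Fin d) : escL d (MvPolynomial.X p ^ 2) = 1 := by
  rw [pow_two, esc_stein, esc_pderiv_X, escL_C]; simp [escD]

lemma escL_four {d : ℕ} (p : Fin d) : escL d (MvPolynomial.X p ^ 4) = 3 := by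
  have : (MvPolynomial.X p ^ 4 : MvPolynomial (Fin d) ℝ)
    = MvPolynomial.X p * MvPolynomial.X p ^ 3 := by ring
  rw [this, esc_stein, MvPolynomial.pderiv_pow, esc_pderiv_X]
  have : (((3 : ℕ) : MvPolynomial (Fin d) ℝ) * MvPolynomial.X p ^ (3 - 1)
      * MvPolynomial.C (escD p p)) = (3 : ℝ) • MvPolynomial.X p ^ 2 := by
    have h3 : (MvPolynomial.C 3 : MvPolynomial (Fin d) ℝ) = 3 := map_ofNat _ 3
    simp [escD, MvPolynomial.smul_eq_C_mul, h3]
  rw [this, map_smul, escL_sq]; simp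

lemma escG_0 {d : ℕ} (p : Fin d) : escL d (escG p 0) = 0 := by
  simp [escG, escL_sq, escL_one]
lemma escG_2 {d : ℕ} (p : Fin d) : escL d (escG p 2) = 2 := by
  simp only [escG, escL_C]
lemma escH_0 {d : ℕ} (p : Fin d) : escL d (escH p 0) = 2 := by
  have : escH p 0 = MvPolynomial.X p ^ 4 - (2 : ℝ) • MvPolynomial.X p ^ 2 + 1 := by
    simp only [escH, MvPolynomial.smul_eq_C_mul, map_ofNat]; ring
  rw [this, map_add, map_sub, map_smul, escL_four, escL_sq, escL_one]; norm_num
lemma escH_2 {d : ℕ} (p : Fin d) : escL d (escH p 2) = 8 := by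
  simp only [escH, map_sub, escL_C, ← MvPolynomial.smul_eq_C_mul, map_smul, escL_sq]; norm_num
lemma escH_4 {d : ℕ} (p : Fin d) : escL d (escH p 4) = 24 := by
  simp only [escH, escL_C]

/-- the one-sample statistic as a polynomial -/
noncomputable def escQ {d : ℕ} (A : Matrix (Fin d) (Fin d) ℝ) : MvPolynomial (Fin d) ℝ :=
  ∑ i, ∑ j, A i j • (MvPolynomial.X i * MvPolynomial.X j)

lemma escQ_eval {d : ℕ} (A : Matrix (Fin d) (Fin d) ℝ) (u : Fin d → ℝ) :
    MvPolynomial.eval u (escQ A) = quadForm A u := by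
  simp [escQ, quadForm, mul_assoc]

lemma esc_mean {d : ℕ} (A : Matrix (Fin d) (Fin d) ℝ) (p : Fin d) :
    escL d (escQ A * (MvPolynomial.X p ^ 2 - 1)) = 2 * A p p := by
  have h : ∀ i j, escL d (MvPolynomial.X i * MvPolynomial.X j * (MvPolynomial.X p ^ 2 - 1))
      = escD i p * escD j p * 2 := by
    intro i j
    have := esc_m2 p (escG p) (escG_spec p) 0 i j
    rw [mul_assoc]
    simp only [escG_0, escG_2, mul_zero, zero_add] at this
    exact this
  simp only [escQ, Finset.sum_mul, smul_mul_assoc, map_sum, map_smul, h, smul_eq_mul]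
  simp [escD, mul_comm]

lemma escD_suml {d : ℕ} (i : Fin d) (f : Fin d → ℝ) : ∑ j, f j * escD j i = f i := by
  simp [escD]
lemma escD_sumr {d : ℕ} (i : Fin d) (f : Fin d → ℝ) : ∑ j, f j * escD i j = f i := by
  simp [escD]

/-- contraction of the last two indices -/
lemma esc_inner {d : ℕ} (A : Matrix (Fin d) (Fin d) ℝ) (p i j : Fin d) (a : ℝ) :
    ∑ k, ∑ l, a * A k l * ((escD i j * escD k l + escD i k * escD j l + escD i l * escD j k) * 2
        + (escD i j * escD k p * escD l p + escD i k * escD j p * escD l p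
          + escD i l * escD j p * escD k p + escD j k * escD i p * escD l p
          + escD j l * escD i p * escD k p + escD k l * escD i p * escD j p) * 8
        + escD i p * escD j p * escD k p * escD l p * 24)
    = a * ((∑ k, A k k) * escD i j + A i j + A j i) * 2
      + a * (escD i j * A p p + escD j p * A i p + escD j p * A p i
        + escD i p * A j p + escD i p * A p j + (∑ k, A k k) * escD i p * escD j p) * 8
      + a * A p p * escD i p * escD j p * 24 := by
  have key : ∀ k, ∑ l, a * A k l * ((escD i j * escD k l + escD i k * escD j l
        + escD i l * escD j k) * 2
        + (escD i j * escD k p * escD l p + escD i k * escD j p * escD l p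
          + escD i l * escD j p * escD k p + escD j k * escD i p * escD l p
          + escD j l * escD i p * escD k p + escD k l * escD i p * escD j p) * 8
        + escD i p * escD j p * escD k p * escD l p * 24)
      = (a * 2 * escD i j + a * 8 * escD i p * escD j p) * A k k
        + (a * 2 * A k j + a * 8 * A k p * escD j p) * escD i k
        + (a * 2 * A k i + a * 8 * A k p * escD i p) * escD j k
        + (a * 8 * A k p * escD i j + a * 8 * A k i * escD j p + a * 8 * A k j * escD i p
          + a * 24 * A k p * escD i p * escD j p) * escD k p := by
    intro k
    rw [← escD_sumr k (fun l => A k l)]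
    rw [← escD_sumr i (fun l => A k l), ← escD_sumr j (fun l => A k l),
      ← escD_suml p (fun l => A k l)]
    simp only [Finset.mul_sum, Finset.sum_mul, ← Finset.sum_add_distrib]
    refine sum_congr rfl fun l _ => ?_
    ring
  simp only [key, Finset.sum_add_distrib, escD_sumr, escD_suml, ← Finset.mul_sum]
  ring

lemma esc_second {d : ℕ} (A : Matrix (Fin d) (Fin d) ℝ) (p : Fin d) :
    escL d ((escQ A * (MvPolynomial.X p ^ 2 - 1)) ^ 2) =
      (2 * ((∑ i, A i i) + 4 * A p p) ^ 2
        + (∑ i, ∑ j, (A i j + A j i) ^ 2)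
        + 8 * (∑ i, (A p i + A i p) ^ 2)
        - 12 * (A p p) ^ 2) + (2 * A p p) ^ 2 := by
  have h : ∀ i j k l, escL d (MvPolynomial.X i * MvPolynomial.X j *
      (MvPolynomial.X k * MvPolynomial.X l) * (MvPolynomial.X p ^ 2 - 1) ^ 2)
      = (escD i j * escD k l + escD i k * escD j l + escD i l * escD j k) * 2
        + (escD i j * escD k p * escD l p + escD i k * escD j p * escD l p
          + escD i l * escD j p * escD k p + escD j k * escD i p * escD l p
          + escD j l * escD i p * escD k p + escD k l * escD i p * escD j p) * 8
        + escD i p * escD j p * escD k p * escD l p * 24 := by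
    intro i j k l
    have := esc_m4 p (escH p) (escH_spec p) 0 i j k l
    simp only [escH_0, escH_2, escH_4, zero_add] at this
    rw [← this]
    congr 1
    simp only [escH]; ring
  rw [mul_pow, pow_two (escQ A)]
  have e : ∀ F : MvPolynomial (Fin d) ℝ, escL d (escQ A * escQ A * F) =
      ∑ i, ∑ j, ∑ k, ∑ l, A i j * A k l * escL d (MvPolynomial.X i * MvPolynomial.X j *
      (MvPolynomial.X k * MvPolynomial.X l) * F) := by
    intro F
    have e1 : escQ A * escQ A * F = ∑ i, ∑ j, ∑ k, ∑ l, (A i j * A k l) •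
        (MvPolynomial.X i * MvPolynomial.X j * (MvPolynomial.X k * MvPolynomial.X l) * F) := by
      simp only [escQ, Finset.sum_mul]
      simp only [Finset.mul_sum, Finset.sum_mul]
      refine sum_congr rfl fun i _ => sum_congr rfl fun j _ => sum_congr rfl fun k _ =>
        sum_congr rfl fun l _ => ?_
      simp only [MvPolynomial.smul_eq_C_mul, map_mul]; ring
    rw [e1]
    simp only [map_sum, map_smul, smul_eq_mul]
  rw [e]
  simp only [h, esc_inner]
  have s1 : ∑ i, ∑ j, (A i j + A j i) ^ 2
      = 2 * ∑ i, ∑ j, A i j * A i j + 2 * ∑ i, ∑ j, A i j * A j i := by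
    have : ∑ i, ∑ j, A j i * A j i = ∑ i, ∑ j, A i j * A i j := Finset.sum_comm
    have e3 : ∀ i j, (A i j + A j i) ^ 2 = A i j * A i j + A j i * A j i + 2 * (A i j * A j i) := by
      intro i j; ring
    simp only [e3, sum_add_distrib, ← Finset.mul_sum, this]; ring
  have s2 : ∑ i, (A p i + A i p) ^ 2
      = ∑ i, A p i * A p i + ∑ i, A i p * A i p + 2 * ∑ i, A p i * A i p := by
    have e3 : ∀ i, (A p i + A i p) ^ 2 = A p i * A p i + A i p * A i p + 2 * (A p i * A i p) := by
      intro i; ring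
    simp only [e3, sum_add_distrib, ← Finset.mul_sum]
  rw [s1, s2]
  have key : ∀ i, ∑ j, (A i j * ((∑ k, A k k) * escD i j + A i j + A j i) * 2
      + A i j * (escD i j * A p p + escD j p * A i p + escD j p * A p i
        + escD i p * A j p + escD i p * A p j + (∑ k, A k k) * escD i p * escD j p) * 8
      + A i j * A p p * escD i p * escD j p * 24)
      = (2 * (∑ k, A k k) + 8 * A p p) * A i i + 2 * ∑ j, A i j * A i j
        + 2 * ∑ j, A i j * A j i + 8 * (A i p * A i p) + 8 * (A p i * A i p)
        + (8 * (∑ j, A i j * A j p) + 8 * (∑ j, A p j * A i j) + 8 * (∑ k, A k k) * A i p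
          + 24 * A p p * A i p) * escD i p := by
    intro i
    generalize (∑ k, A k k) = t
    have r1 : A i i = ∑ j, A i j * escD i j := (escD_sumr i (fun j => A i j)).symm
    have r2 : (2 * t + 8 * A p p) * A i i + 2 * ∑ j, A i j * A i j
        + 2 * ∑ j, A i j * A j i + 8 * (A i p * A i p) + 8 * (A p i * A i p)
        + (8 * (∑ j, A i j * A j p) + 8 * (∑ j, A p j * A i j) + 8 * t * A i p
          + 24 * A p p * A i p) * escD i p
        = (2 * t + 8 * A p p) * (∑ j, A i j * escD i j) + 2 * ∑ j, A i j * A i j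
        + 2 * ∑ j, A i j * A j i + (8 * A i p + 8 * A p i + 8 * t * escD i p
          + 24 * A p p * escD i p) * (∑ j, A i j * escD j p)
        + (8 * (∑ j, A i j * A j p) + 8 * (∑ j, A p j * A i j)) * escD i p := by
      rw [escD_sumr i (fun j => A i j), escD_suml p (fun j => A i j)]; ring
    rw [r2]
    simp only [Finset.mul_sum, Finset.sum_mul, ← Finset.sum_add_distrib]
    refine sum_congr rfl fun l _ => ?_
    ring
  simp only [key, Finset.sum_add_distrib, escD_suml, ← Finset.mul_sum]
  ring

lemma esc_f {d : ℕ} (A : Matrix (Fin d) (Fin d) ℝ) (p : Fin d) (u : Fin d → ℝ) :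
    quadForm A u * (u p ^ 2 - 1)
      = MvPolynomial.eval u (escQ A * (MvPolynomial.X p ^ 2 - 1)) := by
  simp [escQ_eval]

lemma esc_memLp {d : ℕ} (A : Matrix (Fin d) (Fin d) ℝ) (p : Fin d) :
    MemLp (fun u => quadForm A u * (u p ^ 2 - 1)) 2 (stdGaussianVec d) := by
  simp only [esc_f]
  rw [memLp_two_iff_integrable_sq (esc_int_poly _).aestronglyMeasurable]
  have h := esc_int_poly ((escQ A * (MvPolynomial.X p ^ 2 - 1)) ^ 2)
  simp only [map_pow (MvPolynomial.eval _)] at h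
  exact h

lemma esc_mean' {d : ℕ} (A : Matrix (Fin d) (Fin d) ℝ) (p : Fin d) :
    ∫ u, quadForm A u * (u p ^ 2 - 1) ∂(stdGaussianVec d) = 2 * A p p := by
  simp only [esc_f]; rw [← esc_mean, escL_apply]

lemma esc_var {d : ℕ} (A : Matrix (Fin d) (Fin d) ℝ) (p : Fin d) :
    variance (fun u => quadForm A u * (u p ^ 2 - 1)) (stdGaussianVec d) =
      2 * ((∑ i, A i i) + 4 * A p p) ^ 2
        + (∑ i, ∑ j, (A i j + A j i) ^ 2)
        + 8 * (∑ i, (A p i + A i p) ^ 2)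
        - 12 * (A p p) ^ 2 := by
  have h2 := esc_second A p
  rw [escL_apply] at h2
  simp only [map_pow (MvPolynomial.eval _), ← esc_f] at h2
  rw [variance_eq_sub (esc_memLp A p), esc_mean']
  simp only [Pi.pow_apply]
  rw [h2]; ring

theorem elementwise_sample_complexity {d : ℕ} (hd : 1 ≤ d)
    (A : Matrix (Fin d) (Fin d) ℝ) (p : Fin d)
    (δ ε : ℝ) (hδ0 : 0 < δ) (hδ1 : δ < 1) (hε : 0 < ε)
    (N : ℕ) (hN : 0 < N)
    (hNge : (N : ℝ) ≥
      (2 * ((∑ i, A i i) + 4 * A p p) ^ 2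
        + (∑ i, ∑ j, (A i j + A j i) ^ 2)
        + 8 * (∑ i, (A p i + A i p) ^ 2)
        - 12 * (A p p) ^ 2) / (4 * δ * ε ^ 2)) :
    ENNReal.ofReal (1 - δ) ≤
      (Measure.pi fun _ : Fin N => stdGaussianVec d)
        {w | A p p - ε ≤
              (1 / (2 * (N : ℝ))) * ∑ j, quadForm A (w j) * ((w j p) ^ 2 - 1)
          ∧ (1 / (2 * (N : ℝ))) * ∑ j, quadForm A (w j) * ((w j p) ^ 2 - 1)
              ≤ A p p + ε} := by
  rw [← esc_var A p] at hNge
  have hf := esc_memLp A p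
  have hmean := esc_mean' A p
  set f : (Fin d → ℝ) → ℝ := fun u => quadForm A u * (u p ^ 2 - 1) with hfdef
  set μ := stdGaussianVec d with hμ
  have hN' : (0 : ℝ) < N := by exact_mod_cast hN
  set P := Measure.pi fun _ : Fin N => μ with hP
  let S : (Fin N → Fin d → ℝ) → ℝ := ∑ j, fun w => f (w j)
  have hSapp : ∀ w, S w = ∑ j, f (w j) := fun w => by simp [S]
  have hmem : ∀ j : Fin N, MemLp (fun w : Fin N → Fin d → ℝ => f (w j)) 2 P := fun j =>
    hf.comp_measurePreserving (measurePreserving_eval (fun _ : Fin N => μ) j)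
  have hSmem : MemLp S 2 P := memLp_finsetSum' _ fun j _ => hmem j
  have hSvar : variance S P = N * variance f μ := by
    have := variance_sum_pi (μ := fun _ : Fin N => μ) (X := fun _ => f) (fun _ => hf)
    simpa using this
  have hSmean : ∫ w, S w ∂P = N * (2 * A p p) := by
    simp only [hSapp]
    rw [integral_finsetSum _ fun j _ => (hmem j).integrable one_le_two]
    have : ∀ j : Fin N, ∫ w, f (w j) ∂P = 2 * A p p := by
      intro j
      rw [← hmean]
      exact integral_comp_eval (μ := fun _ : Fin N => μ) (i := j) hf.aestronglyMeasurable
    simp [this]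
  have hc : 0 < 2 * (N : ℝ) * ε := by positivity
  have hcheb := meas_ge_le_variance_div_sq hSmem hc
  rw [hSmean, hSvar] at hcheb
  set B := {w | 2 * (N : ℝ) * ε ≤ |S w - N * (2 * A p p)|} with hB
  have hle : N * variance f μ / (2 * (N : ℝ) * ε) ^ 2 ≤ δ := by
    have h4 : 0 < 4 * δ * ε ^ 2 := by positivity
    rw [ge_iff_le, div_le_iff₀ h4] at hNge
    rw [div_le_iff₀ (by positivity)]
    nlinarith [mul_le_mul_of_nonneg_left hNge hN'.le]
  have hBle : P B ≤ ENNReal.ofReal δ := hcheb.trans (ENNReal.ofReal_le_ofReal hle)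
  have hcompl : 1 ≤ P Bᶜ + P B := by
    rw [← measure_univ (μ := P), ← Set.compl_union_self B]
    exact measure_union_le _ _
  have h1 : ENNReal.ofReal (1 - δ) ≤ P Bᶜ := by
    rw [ENNReal.ofReal_sub _ hδ0.le, ENNReal.ofReal_one]
    exact tsub_le_iff_right.2 (hcompl.trans (by gcongr))
  refine h1.trans (measure_mono ?_)
  intro w hw
  have hw' : |S w - N * (2 * A p p)| < 2 * (N : ℝ) * ε := not_le.1 hw
  rw [abs_lt, hSapp] at hw'
  obtain ⟨ha, hb⟩ := hw'
  change A p p - ε ≤ 1 / (2 * (N : ℝ)) * ∑ j, f (w j) ∧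
    1 / (2 * (N : ℝ)) * ∑ j, f (w j) ≤ A p p + ε
  rw [one_div_mul_eq_div, le_div_iff₀ (by positivity), div_le_iff₀ (by positivity)]
  constructor <;> nlinarith
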